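/- Consider PHPIP applied to a constrained potential game Γ satisfying Assumptions 1 and 2, and let z⁰, z¹ be two distinct states of diag(A) with (z⁰,z¹) ∉ E_single. Then the minimal resistance among all positive-probability paths of {P^ε} from z⁰ to z¹ is at least 2; in contrast, for (z⁰,z¹) ∈ E_single this minimal resistance (the resistance of the straight route) is strictly less than 2. -/

import Mathlib

/-!
The limit defining a resistance is computed by an explicit additive cost. An agent with previous
actions `a0 i, a1 i` pays `1` for exploring, `0` for keeping `a1 i` after a non-decrease or for
returning to `a0 i` after a decrease, and the loss `U i a0 - U i a1` for keeping `a1 i ≠ a0 i`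
after a decrease (`agentCost`). Every admissible choice has probability of exact order
`ε ^ agentCost` (`tendsto_agentProb`); multiplying over agents and over steps, every
positive-probability path has probability of exact order `ε ^ pathCost` (`tendsto_pathProb`), so
its resistance is at least `pathCost` (`pathCost_le`).

The cost of reaching a pair of joint actions from `(a, a)` is bounded below by a potential
`level a` on such pairs. It is `0` at `(a, a)`, `1` at `(a, b)` and `(b, a)` for
single-agent neighbours `b` of `a`, one plus the cost of `(a, b) → (b, b)` at `(b, b)`, and `2`
everywhere else. The potential grows along a step by at most the cost of the step
(`level_step_le`): without exploration a pair built from `a` and a single-agent neighbour `b`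
leads only to such pairs, the diagonal pair `(b, b)` can be entered only from `(a, b)`, and each
exploration costs `1`. Hence a path from `(a, a)` to `(a', a')` costs at least
`level a (a', a')`. This is `2` when `a'` is neither `a` nor a neighbour, and the cost of the
straight route when it is one; the latter is below `2`, as a unilateral loss is below `1`.
-/

open Finset Filter Topology
open scoped Classical

namespace PIPIPGame

variable {n : ℕ}

section Defs

variable (A : Fin n → Type) [∀ i, Fintype (A i)] [∀ i, DecidableEq (A i)]
  (U : Fin n → (∀ i, A i) → ℝ) (R : ∀ i, A i → Finset (A i))

/-- Assumption 1: reversibility, feasibility, and at least three available actions. -/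
def Assumption1 : Prop :=
  (∀ (i : Fin n) (a b : A i), b ∈ R i a ↔ a ∈ R i b) ∧
  (∀ (i : Fin n) (a b : A i), Relation.ReflTransGen (fun x y => y ∈ R i x) a b) ∧
  (∀ (i : Fin n) (a : A i), 3 ≤ (R i a).card)

/-- Assumption 2: unilateral feasible deviations change the utility by less than 1. -/
def Assumption2 : Prop :=
  ∀ (i : Fin n) (a a' : ∀ j, A j), a' i ∈ R i (a i) → (∀ j, j ≠ i → a' j = a j) →
    U i a' - U i a < 1

/-- `φ` is a potential function for the constrained game. -/
def IsPotential (φ : (∀ j, A j) → ℝ) : Prop :=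
  ∀ (i : Fin n) (a a' : ∀ j, A j), a' i ∈ R i (a i) → (∀ j, j ≠ i → a' j = a j) →
    U i a' - U i a = φ a' - φ a

/-- `C = max_i max_{a_i} |R_i(a_i)|`. -/
noncomputable def Cmax : ℕ :=
  Finset.univ.sup fun i : Fin n => Finset.univ.sup fun a : A i => (R i a).card

/-- Membership in the state space B. -/
def InB (z : (∀ j, A j) × (∀ j, A j)) : Prop := ∀ i, z.2 i ∈ R i (z.1 i)

/-- The probability that agent `i` chooses `b` under PHPIP with exploration rate `ε`
and parameter `κ`, the previous two joint actions being `a0, a1`. -/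
noncomputable def agentProb (ε κ : ℝ) (a0 a1 : ∀ j, A j) (i : Fin n) (b : A i) : ℝ :=
  if U i a0 ≤ U i a1 then
    (if b = a1 i then 1 - ε else 0)
    + (if b ∈ R i (a1 i) \ {a1 i} then ε / ((R i (a1 i) \ {a1 i}).card : ℝ) else 0)
  else
    (if b = a1 i then (1 - ε) * (κ * ε ^ (U i a0 - U i a1)) else 0)
    + (if b = a0 i then (1 - ε) * (1 - κ * ε ^ (U i a0 - U i a1)) else 0)
    + (if b ∈ R i (a1 i) \ {a0 i, a1 i} then
        ε / ((R i (a1 i) \ {a0 i, a1 i}).card : ℝ) else 0)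

/-- One-step transition probability of the PHPIP chain on pairs of joint actions. -/
noncomputable def transP (ε κ : ℝ) (z z' : (∀ j, A j) × (∀ j, A j)) : ℝ :=
  if z'.1 = z.2 then ∏ i, agentProb A U R ε κ z.1 z.2 i (z'.2 i) else 0

/-- Probability of a path (a list of states) as a product of step transition probabilities. -/
noncomputable def pathProb (ε κ : ℝ) (l : List ((∀ j, A j) × (∀ j, A j))) : ℝ :=
  ((l.zip l.tail).map fun p => transP A U R ε κ p.1 p.2).prod

/-- `l` is a positive-probability path of the family `{P^ε}` from `z` to `z'`. -/
def IsPath (κ : ℝ) (z z' : (∀ j, A j) × (∀ j, A j))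
    (l : List ((∀ j, A j) × (∀ j, A j))) : Prop :=
  l.head? = some z ∧ l.getLast? = some z' ∧
  l.Chain' (fun x y => ∃ ε, ε ∈ Set.Ioo (0 : ℝ) 1 ∧ 0 < transP A U R ε κ x y)

/-- `lam` is the resistance of the path `l`: `P^ε(l)/ε^lam` tends to a positive limit
as `ε → 0+`. -/
def HasResistance (κ : ℝ) (l : List ((∀ j, A j) × (∀ j, A j))) (lam : ℝ) : Prop :=
  0 ≤ lam ∧ ∃ L : ℝ, 0 < L ∧
    Tendsto (fun ε : ℝ => pathProb A U R ε κ l / ε ^ lam) (𝓝[>] (0 : ℝ)) (𝓝 L)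

/-- Accessibility by positive-probability transitions of `P^ε`. -/
def Accessible (ε κ : ℝ) (x y : (∀ j, A j) × (∀ j, A j)) : Prop :=
  Relation.ReflTransGen (fun u v => 0 < transP A U R ε κ u v) x y

/-- A recurrent communication class of `P^ε` (contained in the state space B). -/
def IsRecurrentClass (ε κ : ℝ) (S : Set ((∀ j, A j) × (∀ j, A j))) : Prop :=
  S.Nonempty ∧ (∀ x ∈ S, InB A R x) ∧
  (∀ x ∈ S, ∀ y ∈ S, Accessible A U R ε κ x y) ∧
  (∀ x ∈ S, ∀ y, Accessible A U R ε κ x y → y ∈ S)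

/-- `m`-step transition probability of `P^ε` on B. -/
noncomputable def mstep (ε κ : ℝ) : ℕ → ((∀ j, A j) × (∀ j, A j)) → ((∀ j, A j) × (∀ j, A j)) → ℝ
  | 0, z, z' => if z = z' then 1 else 0
  | (m+1), z, z' => ∑ y ∈ Finset.univ.filter (InB A R),
      mstep ε κ m z y * transP A U R ε κ y z'

/-- `(a, a')` is an edge of `E_single`: exactly one agent changes its action,
and the change is feasible. -/
def ESingle (a a' : ∀ j, A j) : Prop :=
  ∃ i : Fin n, a' i ≠ a i ∧ a' i ∈ R i (a i) ∧ ∀ j, j ≠ i → a' j = a j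

/-- Agent `i` can go from `a` to `b` in exactly `k` feasible steps. -/
def reachesIn (i : Fin n) : ℕ → A i → A i → Prop
  | 0, a, b => a = b
  | (k+1), a, b => ∃ c ∈ R i a, reachesIn i k c b

/-- The minimal number of steps needed by agent `i` to move from `a` to `b`. -/
noncomputable def minSteps (i : Fin n) (a b : A i) : ℕ :=
  sInf {k : ℕ | reachesIn A R i k a b}

/-- `D = max_i D_i`. -/
noncomputable def Dmax : ℕ :=
  Finset.univ.sup fun i : Fin n =>
    Finset.univ.sup fun p : A i × A i => minSteps A R i p.1 p.2

/-- The PIPIP exploration rate `ε(t) = t^{-1/(n(D+1))}`. -/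
noncomputable def epsRate (t : ℕ) : ℝ :=
  (t : ℝ) ^ (-(1 : ℝ) / (n * (Dmax A R + 1)))

end Defs

end PIPIPGame

namespace PIPIPGame

section Resistance

set_option linter.unusedSectionVars false

variable {n : ℕ} (A : Fin n → Type) [∀ i, Fintype (A i)] [∀ i, DecidableEq (A i)]
  (U : Fin n → (∀ i, A i) → ℝ) (R : ∀ i, A i → Finset (A i))

/-! ### The order of magnitude of path probabilities -/

/-- The exponent of `ε` in the probability that agent `i` chooses `b` after `a0, a1`. The value is
meaningful only for admissible choices; it is `1` for all others. -/
noncomputable def agentCost (a0 a1 : ∀ j, A j) (i : Fin n) (b : A i) : ℝ :=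
  if U i a0 ≤ U i a1 then (if b = a1 i then 0 else 1)
  else if b = a0 i then 0 else if b = a1 i then U i a0 - U i a1 else 1

/-- The total cost of the step from the pair `z` to the pair with second component `b`. -/
noncomputable def stepCost (z : (∀ j, A j) × (∀ j, A j)) (b : ∀ j, A j) : ℝ :=
  ∑ i, agentCost A U z.1 z.2 i (b i)

/-- The total cost of a path. -/
noncomputable def pathCost (l : List ((∀ j, A j) × (∀ j, A j))) : ℝ :=
  ((l.zip l.tail).map fun p => stepCost A U p.1 p.2.2).sum

/-- The choices open to agent `i` after `a0, a1`: a feasible action, or a return to the previous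
action after a decrease in utility. -/
def AgentAdm (a0 a1 : ∀ j, A j) (i : Fin n) (b : A i) : Prop :=
  b ∈ R i (a1 i) ∨ (U i a1 < U i a0 ∧ b = a0 i)

/-- A step of the chain in which every agent makes an admissible choice. -/
def StepAdm (z z' : (∀ j, A j) × (∀ j, A j)) : Prop :=
  z'.1 = z.2 ∧ ∀ i, AgentAdm A U R z.1 z.2 i (z'.2 i)

variable {A U R}

lemma agentAdm_of_prob_ne_zero (hrefl : ∀ i a, a ∈ R i a) {ε κ : ℝ} {a0 a1 : ∀ j, A j} {i : Fin n}
    {b : A i} (h : agentProb A U R ε κ a0 a1 i b ≠ 0) : AgentAdm A U R a0 a1 i b := by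
  by_contra hb
  simp only [AgentAdm, not_or, not_and] at hb
  obtain ⟨hb1, hb2⟩ := hb
  have hne : b ≠ a1 i := fun e => hb1 (e ▸ hrefl i _)
  apply h
  unfold agentProb
  split_ifs with h0 <;> simp_all

lemma stepAdm_of_pos (hrefl : ∀ i a, a ∈ R i a) {κ : ℝ} {z z' : (∀ j, A j) × (∀ j, A j)}
    (h : ∃ ε, ε ∈ Set.Ioo (0 : ℝ) 1 ∧ 0 < transP A U R ε κ z z') : StepAdm A U R z z' := by
  obtain ⟨ε, -, h⟩ := h
  unfold transP at h
  split_ifs at h with h0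
  · exact ⟨h0, fun i => agentAdm_of_prob_ne_zero hrefl
      (Finset.prod_ne_zero_iff.1 h.ne' i (Finset.mem_univ i))⟩
  · exact absurd h (lt_irrefl _)

lemma tendsto_rpow_nhdsGT_zero {s : ℝ} (hs : 0 < s) :
    Tendsto (fun ε : ℝ => ε ^ s) (𝓝[>] (0 : ℝ)) (𝓝 0) := by
  have h := (Real.continuousAt_rpow_const 0 s (Or.inr hs.le)).tendsto
  rw [Real.zero_rpow hs.ne'] at h
  exact h.mono_left nhdsWithin_le_nhds

/-- An admissible choice has probability of exact order `ε ^ agentCost`. -/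
lemma tendsto_agentProb {κ : ℝ} (hκ : 0 < κ) {a0 a1 : ∀ j, A j} {i : Fin n} {b : A i}
    (h : AgentAdm A U R a0 a1 i b) :
    ∃ L : ℝ, 0 < L ∧ Tendsto (fun ε : ℝ =>
      agentProb A U R ε κ a0 a1 i b / ε ^ agentCost A U a0 a1 i b) (𝓝[>] (0 : ℝ)) (𝓝 L) := by
  have hid : Tendsto (fun ε : ℝ => ε) (𝓝[>] (0 : ℝ)) (𝓝 0) :=
    tendsto_id.mono_left nhdsWithin_le_nhds
  have hsub : Tendsto (fun ε : ℝ => 1 - ε) (𝓝[>] (0 : ℝ)) (𝓝 1) := by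
    simpa using hid.const_sub 1
  -- Exploration is uniform on a nonempty finite set, hence of order `ε`.
  have hexp : ∀ S : Finset (A i), b ∈ S → ∃ L : ℝ, 0 < L ∧
      Tendsto (fun ε : ℝ => ε / (S.card : ℝ) / ε) (𝓝[>] (0 : ℝ)) (𝓝 L) := by
    intro S hS
    have hc : (0 : ℝ) < S.card := by exact_mod_cast Finset.card_pos.2 ⟨b, hS⟩
    refine ⟨1 / S.card, by positivity, tendsto_const_nhds.congr' ?_⟩
    filter_upwards [self_mem_nhdsWithin] with ε hε
    have : ε ≠ 0 := (Set.mem_Ioi.1 hε).ne'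
    field_simp
  by_cases hU : U i a0 ≤ U i a1
  · have hR : b ∈ R i (a1 i) := by
      rcases h with h | h
      · exact h
      · exact absurd h.1 (not_lt.2 hU)
    by_cases hb : b = a1 i
    · exact ⟨1, one_pos, by simpa [agentProb, agentCost, hU, hb] using hsub⟩
    · have hm : b ∈ R i (a1 i) \ {a1 i} := by simp [hR, hb]
      simpa only [agentProb, agentCost, if_pos hU, if_neg hb, if_pos hm, zero_add,
        Real.rpow_one] using hexp _ hm
  · have hΔ : 0 < U i a0 - U i a1 := sub_pos.2 (not_le.1 hU)
    have hr := tendsto_rpow_nhdsGT_zero hΔ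
    by_cases hb0 : b = a0 i
    · have hm : b ∉ R i (a1 i) \ {a0 i, a1 i} := by simp [hb0]
      have hlim : Tendsto (fun ε : ℝ => (1 - ε) * (1 - κ * ε ^ (U i a0 - U i a1)))
          (𝓝[>] (0 : ℝ)) (𝓝 1) := by
        simpa using hsub.mul ((hr.const_mul κ).const_sub 1)
      by_cases hb : b = a1 i
      · refine ⟨1, one_pos, hsub.congr fun ε => ?_⟩
        simp only [agentProb, agentCost, if_neg hU, if_pos hb0, if_pos hb, if_neg hm,
          Real.rpow_zero]
        ring
      · refine ⟨1, one_pos, hlim.congr fun ε => ?_⟩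
        simp only [agentProb, agentCost, if_neg hU, if_pos hb0, if_neg hb, if_neg hm,
          Real.rpow_zero]
        ring
    · by_cases hb : b = a1 i
      · have hm : b ∉ R i (a1 i) \ {a0 i, a1 i} := by simp [hb]
        have hlim : Tendsto (fun ε : ℝ => (1 - ε) * κ) (𝓝[>] (0 : ℝ)) (𝓝 κ) := by
          simpa using hsub.mul_const κ
        refine ⟨κ, hκ, hlim.congr' ?_⟩
        filter_upwards [self_mem_nhdsWithin] with ε hε
        have : ε ^ (U i a0 - U i a1) ≠ 0 := (Real.rpow_pos_of_pos hε _).ne'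
        simp only [agentProb, agentCost, if_neg hU, if_neg hb0, if_pos hb, if_neg hm]
        field_simp
        ring
      · have hR : b ∈ R i (a1 i) := by
          rcases h with h | h
          · exact h
          · exact absurd h.2 hb0
        have hm : b ∈ R i (a1 i) \ {a0 i, a1 i} := by simp [hR, hb, hb0]
        simpa only [agentProb, agentCost, if_neg hU, if_neg hb0, if_neg hb, if_pos hm, zero_add,
          Real.rpow_one] using hexp _ hm

lemma tendsto_transP {κ : ℝ} (hκ : 0 < κ) {z z' : (∀ j, A j) × (∀ j, A j)}
    (h : StepAdm A U R z z') :
    ∃ L : ℝ, 0 < L ∧ Tendsto (fun ε : ℝ =>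
      transP A U R ε κ z z' / ε ^ stepCost A U z z'.2) (𝓝[>] (0 : ℝ)) (𝓝 L) := by
  choose L hL hlim using fun i => tendsto_agentProb hκ (h.2 i)
  refine ⟨∏ i, L i, Finset.prod_pos fun i _ => hL i,
    (tendsto_finsetProd Finset.univ fun i _ => hlim i).congr' ?_⟩
  filter_upwards [self_mem_nhdsWithin] with ε hε
  rw [transP, if_pos h.1, stepCost, Real.rpow_sum_of_pos hε, Finset.prod_div_distrib]

lemma tendsto_pathProb {κ : ℝ} (hκ : 0 < κ) :
    ∀ l : List ((∀ j, A j) × (∀ j, A j)), l.IsChain (StepAdm A U R) →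
      ∃ L : ℝ, 0 < L ∧ Tendsto (fun ε : ℝ =>
        pathProb A U R ε κ l / ε ^ pathCost A U l) (𝓝[>] (0 : ℝ)) (𝓝 L)
  | [], _ => ⟨1, one_pos, by simp [pathProb, pathCost]⟩
  | [x], _ => ⟨1, one_pos, by simp [pathProb, pathCost]⟩
  | x :: y :: l, h => by
    rw [List.isChain_cons_cons] at h
    obtain ⟨L₁, hL₁, h₁⟩ := tendsto_transP hκ h.1
    obtain ⟨L₂, hL₂, h₂⟩ := tendsto_pathProb hκ (y :: l) h.2
    refine ⟨L₁ * L₂, mul_pos hL₁ hL₂, (h₁.mul h₂).congr' ?_⟩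
    filter_upwards [self_mem_nhdsWithin] with ε hε
    have hp : pathProb A U R ε κ (x :: y :: l)
        = transP A U R ε κ x y * pathProb A U R ε κ (y :: l) := by simp [pathProb]
    have hc : pathCost A U (x :: y :: l)
        = stepCost A U x y.2 + pathCost A U (y :: l) := by simp [pathCost]
    rw [hp, hc, Real.rpow_add hε, div_mul_div_comm]

lemma pathCost_le {κ : ℝ} (hκ : 0 < κ) {l : List ((∀ j, A j) × (∀ j, A j))}
    (h : l.IsChain (StepAdm A U R)) {lam : ℝ} (hlam : HasResistance A U R κ l lam) :
    pathCost A U l ≤ lam := by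
  obtain ⟨L, -, hL⟩ := tendsto_pathProb hκ l h
  obtain ⟨-, L', hL', hlim⟩ := hlam
  by_contra! hlt
  -- If `lam` were smaller, the quotient by `ε ^ lam` would carry a vanishing factor.
  have h0 := hL.mul (tendsto_rpow_nhdsGT_zero (sub_pos.2 hlt))
  rw [mul_zero] at h0
  refine hL'.ne' (tendsto_nhds_unique (hlim.congr' ?_) h0)
  filter_upwards [self_mem_nhdsWithin] with ε hε
  have h1 : ε ^ lam ≠ 0 := (Real.rpow_pos_of_pos hε _).ne'
  have h2 : ε ^ pathCost A U l ≠ 0 := (Real.rpow_pos_of_pos hε _).ne'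
  rw [Real.rpow_sub hε]
  field_simp

/-! ### Lower bounds on the cost of a step -/

lemma agentCost_nonneg (a0 a1 : ∀ j, A j) (i : Fin n) (b : A i) :
    0 ≤ agentCost A U a0 a1 i b := by
  unfold agentCost
  split_ifs <;> linarith

lemma stepCost_nonneg (z : (∀ j, A j) × (∀ j, A j)) (b : ∀ j, A j) : 0 ≤ stepCost A U z b :=
  Finset.sum_nonneg fun i _ => agentCost_nonneg _ _ i _

/-- A step of cost less than `1` contains no exploration. -/
lemma eq_or_eq_of_stepCost_lt {z : (∀ j, A j) × (∀ j, A j)} {b : ∀ j, A j}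
    (h : stepCost A U z b < 1) (i : Fin n) : b i = z.1 i ∨ b i = z.2 i := by
  by_contra! hb
  have h1 : agentCost A U z.1 z.2 i (b i) = 1 := by simp [agentCost, hb.1, hb.2]
  have h2 := Finset.single_le_sum (f := fun i => agentCost A U z.1 z.2 i (b i))
    (fun i _ => agentCost_nonneg _ _ i _) (Finset.mem_univ i)
  simp only [h1] at h2
  exact absurd h (not_lt.2 h2)

lemma eq_of_stepCost_diag_lt {a b : ∀ j, A j} (h : stepCost A U (a, a) b < 1) : b = a :=
  funext fun i => (eq_or_eq_of_stepCost_lt h i).elim id id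

/-- From a diagonal pair the cost is the number of agents that change their action. -/
lemma stepCost_diag (a b : ∀ j, A j) :
    stepCost A U (a, a) b = ((Finset.univ.filter fun i => b i ≠ a i).card : ℝ) := by
  simp [stepCost, agentCost, Finset.sum_ite, Finset.filter_not]

lemma stepCost_diag_of_eSingle {a b : ∀ j, A j} (h : ESingle A R a b) :
    stepCost A U (a, a) b = 1 := by
  obtain ⟨i, hi, -, hj⟩ := h
  rw [stepCost_diag]
  have : (Finset.univ.filter fun i => b i ≠ a i) = {i} := by
    ext j
    simp only [Finset.mem_filter, Finset.mem_univ, true_and, Finset.mem_singleton]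
    exact ⟨fun h => by_contra fun hne => h (hj j hne), fun h => h ▸ hi⟩
  simp [this]

/-- A step off the diagonal pair `(a, a)` that costs less than `2` moves at most one agent. -/
lemma eq_or_eSingle_of_stepCost_lt {a b : ∀ j, A j} (hadm : StepAdm A U R (a, a) (a, b))
    (h : stepCost A U (a, a) b < 2) : b = a ∨ ESingle A R a b := by
  rw [stepCost_diag] at h
  have h' : (Finset.univ.filter fun i => b i ≠ a i).card < 2 := by exact_mod_cast h
  by_cases hba : b = a
  · exact Or.inl hba
  obtain ⟨i, hi⟩ := Function.ne_iff.1 hba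
  refine Or.inr ⟨i, hi, ?_, fun j hj => ?_⟩
  · rcases hadm.2 i with h | h
    · exact h
    · exact absurd h.1 (lt_irrefl _)
  · by_contra hbj
    exact hj (Finset.card_le_one.1 (Nat.lt_succ_iff.1 h') j (by simpa using hbj) i
      (by simpa using hi))

/-- Without exploration, a pair of single-agent neighbours leads back to one of the two. -/
lemma eq_or_eq_of_eSingle {a b c : ∀ j, A j} (h : ESingle A R a b)
    (hc : ∀ i, c i = a i ∨ c i = b i) : c = a ∨ c = b := by
  obtain ⟨i, -, -, hj⟩ := h
  refine (hc i).imp (fun hi => funext fun j => ?_) (fun hi => funext fun j => ?_)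
  all_goals
    by_cases hji : j = i
    · subst hji
      exact hi
    · rcases hc j with h | h <;> simp [h, hj j hji]

/-- Keeping a unilateral deviation costs less than `1`, since it loses less than `1`. -/
lemma stepCost_keep_lt_one (h1 : Assumption1 A R) (h2 : Assumption2 A U R) {a b : ∀ j, A j}
    (h : ESingle A R a b) : stepCost A U (a, b) b < 1 := by
  obtain ⟨i, hi, hR, hj⟩ := h
  have hs : stepCost A U (a, b) b = agentCost A U a b i (b i) := by
    refine Finset.sum_eq_single i (fun j _ hji => ?_) (by simp)
    simp [agentCost, hj j hji]
  rw [hs]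
  have := h2 i b a ((h1.1 i _ _).1 hR) fun j hji => (hj j hji).symm
  unfold agentCost
  split_ifs <;> first | linarith | simp_all

/-! ### The potential -/

variable (A U R) in
/-- A potential bounding from below the cost of reaching a pair from `(a, a)`. It is cut off at `2`,
the cost of two explorations. -/
noncomputable def level (a : ∀ j, A j) (z : (∀ j, A j) × (∀ j, A j)) : ℝ :=
  if z = (a, a) then 0
  else if (z.1 = a ∧ ESingle A R a z.2) ∨ (z.2 = a ∧ ESingle A R a z.1) then 1
  else if z.1 = z.2 ∧ ESingle A R a z.1 then 1 + stepCost A U (a, z.1) z.1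
  else 2

lemma ESingle.ne {a b : ∀ j, A j} (h : ESingle A R a b) : b ≠ a := by
  obtain ⟨i, hi, -⟩ := h
  exact fun e => hi (by rw [e])

lemma level_self (a : ∀ j, A j) : level A U R a (a, a) = 0 := by simp [level]

lemma level_right {a b : ∀ j, A j} (h : ESingle A R a b) : level A U R a (a, b) = 1 := by
  simp [level, h, h.ne]

lemma level_left {a b : ∀ j, A j} (h : ESingle A R a b) : level A U R a (b, a) = 1 := by
  simp [level, h, h.ne]

lemma level_diag {a b : ∀ j, A j} (h : ESingle A R a b) :
    level A U R a (b, b) = 1 + stepCost A U (a, b) b := by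
  simp [level, h, h.ne]

lemma level_le_two (h1 : Assumption1 A R) (h2 : Assumption2 A U R) (a : ∀ j, A j)
    (z : (∀ j, A j) × (∀ j, A j)) : level A U R a z ≤ 2 := by
  unfold level
  split_ifs with _ _ h
  · norm_num
  · norm_num
  · linarith [stepCost_keep_lt_one h1 h2 h.2]
  · exact le_rfl

/-- The potential grows along a step by at most the cost of the step. -/
lemma level_step_le (h1 : Assumption1 A R) (h2 : Assumption2 A U R) (a : ∀ j, A j)
    {z z' : (∀ j, A j) × (∀ j, A j)} (h : StepAdm A U R z z') :
    level A U R a z' ≤ level A U R a z + stepCost A U z z'.2 := by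
  have hle := level_le_two h1 h2 a z'
  have hnn := stepCost_nonneg (U := U) z z'.2
  obtain ⟨p, q⟩ := z
  obtain ⟨q', r⟩ := z'
  obtain rfl : q' = q := h.1
  simp only at hnn ⊢
  by_cases hz : (p, q') = (a, a)
  · obtain ⟨rfl, rfl⟩ := Prod.mk.inj hz
    rw [level_self, zero_add]
    by_cases hc : stepCost A U (q', q') r < 2
    · rcases eq_or_eSingle_of_stepCost_lt h hc with rfl | hs
      · rw [level_self]
        exact hnn
      · rw [level_right hs, stepCost_diag_of_eSingle hs]
    · linarith
  by_cases hR : p = a ∧ ESingle A R a q'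
  · obtain ⟨rfl, hs⟩ := hR
    rw [level_right hs]
    by_cases hc : stepCost A U (p, q') r < 1
    · rcases eq_or_eq_of_eSingle hs (eq_or_eq_of_stepCost_lt hc) with rfl | rfl
      · rw [level_left hs]
        linarith
      · rw [level_diag hs]
    · linarith
  by_cases hL : q' = a ∧ ESingle A R a p
  · obtain ⟨rfl, hs⟩ := hL
    rw [level_left hs]
    by_cases hc : stepCost A U (p, q') r < 1
    · rcases eq_or_eq_of_eSingle hs fun i => (eq_or_eq_of_stepCost_lt hc i).symm with rfl | rfl
      · rw [level_self]
        linarith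
      · rw [level_right hs]
        linarith
    · linarith
  by_cases hD : p = q' ∧ ESingle A R a p
  · obtain ⟨rfl, hs⟩ := hD
    have hk := stepCost_nonneg (U := U) (a, p) p
    by_cases hc : stepCost A U (p, p) r < 1
    · obtain rfl := eq_of_stepCost_diag_lt hc
      linarith
    · rw [level_diag hs]
      linarith
  · have : level A U R a (p, q') = 2 := by
      simp only [level, if_neg hz, if_neg (not_or.2 ⟨hR, hL⟩), if_neg hD]
    linarith

lemma level_le_pathCost (h1 : Assumption1 A R) (h2 : Assumption2 A U R) (a : ∀ j, A j)
    {z' : (∀ j, A j) × (∀ j, A j)} :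
    ∀ (l : List ((∀ j, A j) × (∀ j, A j))) (z : (∀ j, A j) × (∀ j, A j)),
      l.head? = some z → l.getLast? = some z' → l.IsChain (StepAdm A U R) →
        level A U R a z' ≤ level A U R a z + pathCost A U l
  | [], _, h, _, _ => by simp at h
  | [x], z, h, h', _ => by
    obtain rfl : x = z := by simpa using h
    obtain rfl : x = z' := by simpa using h'
    simp [pathCost]
  | x :: y :: l, z, h, h', hch => by
    obtain rfl : x = z := by simpa using h
    rw [List.isChain_cons_cons] at hch
    have hrec := level_le_pathCost h1 h2 a (y :: l) y rfl
      (by simpa [List.getLast?_cons_cons] using h') hch.2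
    have hstep := level_step_le h1 h2 a hch.1
    have hc : pathCost A U (x :: y :: l)
        = stepCost A U x y.2 + pathCost A U (y :: l) := by simp [pathCost]
    linarith

/-- Every path from `(a, a)` has resistance at least the level of its endpoint. -/
lemma level_le_resistance (hrefl : ∀ i a, a ∈ R i a) (h1 : Assumption1 A R)
    (h2 : Assumption2 A U R) {κ : ℝ} (hκ : 0 < κ) {a : ∀ j, A j}
    {z' : (∀ j, A j) × (∀ j, A j)} {l : List ((∀ j, A j) × (∀ j, A j))} {lam : ℝ}
    (hp : IsPath A U R κ (a, a) z' l) (hl : HasResistance A U R κ l lam) :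
    level A U R a z' ≤ lam := by
  have hch : l.IsChain (StepAdm A U R) :=
    List.IsChain.imp (fun _ _ h => stepAdm_of_pos hrefl h) hp.2.2
  have h := level_le_pathCost h1 h2 a l (a, a) hp.1 hp.2.1 hch
  rw [level_self, zero_add] at h
  exact h.trans (pathCost_le hκ hch hl)

/-! ### Resistances -/

/-- The existence of an agent forces `Cmax ≥ 3`, so the lower bound on `κ` is positive. -/
lemma kappa_pos (h1 : Assumption1 A R) {κ : ℝ} (hκ : 1 / ((Cmax A R : ℝ) - 1) < κ) (i : Fin n)
    (x : A i) : 0 < κ := by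
  have h3 : 3 ≤ Cmax A R := by
    refine (h1.2.2 i x).trans ?_
    refine le_trans ?_ (Finset.le_sup (f := fun i : Fin n =>
      Finset.univ.sup fun a : A i => (R i a).card) (Finset.mem_univ i))
    exact Finset.le_sup (f := fun a : A i => (R i a).card) (Finset.mem_univ x)
  have h3' : (3 : ℝ) ≤ Cmax A R := by exact_mod_cast h3
  exact lt_trans (one_div_pos.2 (by linarith)) hκ

lemma straight_isChain (hrefl : ∀ i a, a ∈ R i a) {a b : ∀ j, A j} (h : ESingle A R a b) :
    List.IsChain (StepAdm A U R) [(a, a), (a, b), (b, b)] := by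
  obtain ⟨i, -, hR, hj⟩ := h
  have hfirst : StepAdm A U R (a, a) (a, b) := by
    refine ⟨rfl, fun j => Or.inl ?_⟩
    by_cases hji : j = i
    · subst hji
      exact hR
    · simpa [hj j hji] using hrefl j (a j)
  have hsecond : StepAdm A U R (a, b) (b, b) := ⟨rfl, fun j => Or.inl (hrefl j (b j))⟩
  simp [hfirst, hsecond]

end Resistance

end PIPIPGame

open PIPIPGame Finset Filter Topology

/-- **Minimal resistances between diagonal states.** For distinct diagonal states
`z⁰ = (a,a)`, `z¹ = (a',a')`: if `(z⁰,z¹) ∉ E_single`, every positive-probability path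
from `z⁰` to `z¹` has resistance at least `2`; if `(z⁰,z¹) ∈ E_single`, the straight
route has resistance strictly less than `2`, minimal among all paths from `z⁰` to
`z¹`. -/
theorem resistance_dichotomy_between_diagonal_states
    {n : ℕ} (A : Fin n → Type) [∀ i, Fintype (A i)] [∀ i, DecidableEq (A i)]
    (U : Fin n → (∀ i, A i) → ℝ) (R : ∀ i, A i → Finset (A i)) (κ : ℝ)
    (hrefl : ∀ i a, a ∈ R i a)
    (h1 : Assumption1 A R) (h2 : Assumption2 A U R)
    (hκ : 1 / ((Cmax A R : ℝ) - 1) < κ ∧ κ ≤ 1 / 2) :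
    (∀ a a' : ∀ i, A i, a ≠ a' → ¬ ESingle A R a a' →
      ∀ (l : List ((∀ i, A i) × (∀ i, A i))) (lam : ℝ),
        IsPath A U R κ (a, a) (a', a') l → HasResistance A U R κ l lam → 2 ≤ lam) ∧
    (∀ a a' : ∀ i, A i, ESingle A R a a' →
      ∃ lam : ℝ, HasResistance A U R κ [(a, a), (a, a'), (a', a')] lam ∧ lam < 2 ∧
        ∀ (l : List ((∀ i, A i) × (∀ i, A i))) (lam' : ℝ),
          IsPath A U R κ (a, a) (a', a') l → HasResistance A U R κ l lam' →
            lam ≤ lam') := by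
  constructor
  · intro a a' hne hns l lam hp hl
    obtain ⟨i, -⟩ := Function.ne_iff.1 hne
    have hlev : level A U R a (a', a') = 2 := by
      have hns' : ¬ (a' = a) := fun e => hne e.symm
      simp [level, hns, hns']
    exact hlev ▸ level_le_resistance hrefl h1 h2 (kappa_pos h1 hκ.1 i (a i)) hp hl
  · intro a a' hs
    have hκ0 : 0 < κ := by
      obtain ⟨i, -⟩ := hs
      exact kappa_pos h1 hκ.1 i (a i)
    have hcost : pathCost A U [(a, a), (a, a'), (a', a')] = 1 + stepCost A U (a, a') a' := by
      simp [pathCost, stepCost_diag_of_eSingle hs]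
    refine ⟨1 + stepCost A U (a, a') a',
      ⟨by linarith [stepCost_nonneg (U := U) (a, a') a'], ?_⟩,
      by linarith [stepCost_keep_lt_one h1 h2 hs], fun l lam' hp hl => ?_⟩
    · exact hcost ▸ tendsto_pathProb hκ0 _ (straight_isChain hrefl hs)
    · exact level_diag (U := U) hs ▸ level_le_resistance hrefl h1 h2 hκ0 hp hl
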